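/- Let a, b be positive integers with a ≤ b. The quadratic form f^{a,b}_3(x,y,z,w) = a·x² + b·y² + 3·(z² + z·w + w²) represents every nonnegative integer (with x, y, z, w ∈ ℤ) if and only if a = 1 and b = 2. -/

import Mathlib

/-!
Necessity comes from the integers `1`, `2` and `6`: the first forces `a = 1`, the second `b ≤ 2`,
and `x² + y² + 3(z² + zw + w²)` misses `6`, because `z² + zw + w²` misses `2`.

For sufficiency, substituting `(z - w, 2w)` in `z² + zw + w²` gives `z² + 3w²`, so it is enough to
represent every `n` by `x² + 2y² + 3z² + 9w²`. The ternary part represents every odd `n`: if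
`6n = X² + Y² + Z²` then, up to signs and order of `X`, `Y`, `Z`, the three squares in
`(X + Y - 2Z)² + 2(X + Y + Z)² + 3(X - Y)² = 6(X² + Y² + Z²) = 36n` are divisible by `36`.
If `n ≡ 2 mod 4` and `9 ≤ n`, then `n - 9` is odd; if `4 ∣ n`, scale a representation of `n / 4`.

That a number `n ≡ 2 mod 4`, such as six times an odd number, is a sum of three squares is
Dirichlet's argument: a prime `p = dn - 1` for which `-d` is a square modulo `p` yields a positive
definite integral ternary form of determinant `1` representing `n`. Such a form is equivalent to
the sum of three squares, because Minkowski's theorem gives a vector of norm `1`, which splits off.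
-/

/-! ### Short vectors of positive definite forms -/

section ShortVectors

open Filter Matrix MeasureTheory Metric Topology

variable {ι : Type*}

open scoped MatrixOrder in
theorem exists_eq_transpose_mul_self_of_posDef [Fintype ι] [DecidableEq ι] {A : Matrix ι ι ℝ}
    (hA : A.PosDef) :
    ∃ M : Matrix ι ι ℝ, M.det ≠ 0 ∧ A = Mᵀ * M := by
  obtain ⟨M, hM⟩ := CStarAlgebra.nonneg_iff_eq_star_mul_self.mp hA.posSemidef.nonneg
  rw [star_eq_conjTranspose, conjTranspose_eq_transpose_of_trivial] at hM
  refine ⟨M, fun h0 ↦ hA.det_pos.ne' ?_, hM⟩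
  rw [hM, det_mul, h0, mul_zero]

theorem exists_intCast_mem_of_volume [Fintype ι] {s : Set (ι → ℝ)}
    (hsymm : ∀ x ∈ s, -x ∈ s) (hconv : Convex ℝ s) (hvol : 2 ^ Fintype.card ι < volume s) :
    ∃ v : ι → ℤ, v ≠ 0 ∧ (fun i ↦ (v i : ℝ)) ∈ s := by
  classical
  have : Countable (Submodule.span ℤ (Set.range (Pi.basisFun ℝ ι))).toAddSubgroup :=
    inferInstanceAs (Countable (Submodule.span ℤ (Set.range (Pi.basisFun ℝ ι))))
  have hdet : (Matrix.of (Pi.basisFun ℝ ι)).det = 1 := by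
    rw [show Matrix.of (Pi.basisFun ℝ ι) = 1 by
      ext i j; simp [Matrix.one_apply, Pi.single_apply, eq_comm], det_one]
  obtain ⟨x, hx0, hxs⟩ := exists_ne_zero_mem_lattice_of_measure_mul_two_pow_lt_measure
    (ZSpan.isAddFundamentalDomain' (Pi.basisFun ℝ ι) volume) hsymm hconv
    (by simpa [ZSpan.volume_fundamentalDomain, hdet] using hvol)
  choose v hv using ((Pi.basisFun ℝ ι).mem_span_iff_repr_mem ℤ (x : ι → ℝ)).1 x.2
  have hxv : (x : ι → ℝ) = fun i ↦ (v i : ℝ) := by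
    ext i
    simpa using (hv i).symm
  refine ⟨v, ?_, hxv ▸ hxs⟩
  rintro rfl
  exact hx0 (Subtype.ext (hxv.trans (funext fun _ ↦ Int.cast_zero)))

theorem exists_int_dotProduct_mulVec_lt [Fintype ι] [DecidableEq ι] {A : Matrix ι ι ℝ}
    (hA : A.PosDef) {r : ℝ} (hr : 0 < r)
    (hvol : ENNReal.ofReal √A.det * 2 ^ Fintype.card ι
      < volume (ball (0 : EuclideanSpace ℝ ι) r)) :
    ∃ v : ι → ℤ, v ≠ 0 ∧ (fun i ↦ (v i : ℝ)) ⬝ᵥ A *ᵥ (fun i ↦ (v i : ℝ)) < r ^ 2 := by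
  obtain ⟨M, hM0, rfl⟩ := exists_eq_transpose_mul_self_of_posDef hA
  set f : (ι → ℝ) →ₗ[ℝ] EuclideanSpace ℝ ι :=
    (WithLp.linearEquiv 2 ℝ (ι → ℝ)).symm.toLinearMap ∘ₗ M.toLin'
  have hf (x : ι → ℝ) : f x = WithLp.toLp 2 (M *ᵥ x) := rfl
  have hfvol : volume (f ⁻¹' ball 0 r) =
      ENNReal.ofReal |M.det|⁻¹ * volume (ball (0 : EuclideanSpace ℝ ι) r) := by
    rw [show ⇑f = WithLp.toLp 2 ∘ M.toLin' from rfl, Set.preimage_comp,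
      Measure.addHaar_preimage_linearMap _ (by rwa [LinearMap.det_toLin']), LinearMap.det_toLin',
      abs_inv, (PiLp.volume_preserving_toLp ι).measure_preimage
        isOpen_ball.measurableSet.nullMeasurableSet]
  obtain ⟨v, hv0, hv⟩ := exists_intCast_mem_of_volume (s := f ⁻¹' ball 0 r)
    (fun x hx ↦ by simpa using hx) ((convex_ball 0 r).linear_preimage f) (by
      rw [det_mul, det_transpose, Real.sqrt_mul_self_eq_abs] at hvol
      rw [hfvol, ENNReal.ofReal_inv_of_pos (abs_pos.2 hM0), ← ENNReal.div_eq_inv_mul]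
      exact (ENNReal.lt_div_iff_mul_lt (by simp [hM0]) (by simp)).2 (by rwa [mul_comm]))
  refine ⟨v, hv0, ?_⟩
  rw [Set.mem_preimage, mem_ball_zero_iff, hf, EuclideanSpace.norm_eq, Real.sqrt_lt' hr] at hv
  rw [← mulVec_mulVec, dotProduct_mulVec, vecMul_transpose]
  simpa [dotProduct, ← sq] using hv

theorem two_pow_lt_volume_ball_sqrt_two {n : ℕ} (hn0 : 0 < n) (hn4 : n ≤ 4) :
    2 ^ n < volume (ball (0 : EuclideanSpace ℝ (Fin n)) √2) := by
  obtain ⟨c, hc, hvol⟩ : ∃ c : ℝ, √2 ^ n < c ∧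
      volume (ball (0 : EuclideanSpace ℝ (Fin n)) √2) = .ofReal √2 ^ n * .ofReal c := by
    have hπ := Real.pi_gt_three
    have h2 : √2 ^ 2 = 2 := Real.sq_sqrt zero_le_two
    interval_cases n
    · refine ⟨2, by nlinarith, ?_⟩
      simp [InnerProductSpace.volume_ball_of_dim_odd (k := 0)]
    · refine ⟨Real.pi, by linarith, ?_⟩
      simp [InnerProductSpace.volume_ball_of_dim_even (k := 1)]
    · refine ⟨Real.pi * 2 ^ 2 / 3, by nlinarith [Real.sqrt_nonneg 2], ?_⟩
      simp [InnerProductSpace.volume_ball_of_dim_odd (k := 1), Nat.doubleFactorial]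
    · refine ⟨Real.pi ^ 2 / 2, by nlinarith, ?_⟩
      simp [InnerProductSpace.volume_ball_of_dim_even (k := 2)]
  have hpos : 0 < √2 ^ n := by positivity
  rw [hvol, ← ENNReal.ofReal_pow (Real.sqrt_nonneg 2), ← ENNReal.ofReal_mul hpos.le,
    ← ENNReal.ofReal_ofNat 2, ← ENNReal.ofReal_pow zero_le_two,
    ENNReal.ofReal_lt_ofReal_iff (mul_pos hpos (hpos.trans hc))]
  calc (2 : ℝ) ^ n = √2 ^ n * √2 ^ n := by rw [← mul_pow, Real.mul_self_sqrt zero_le_two]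
    _ < √2 ^ n * c := mul_lt_mul_of_pos_left hc hpos

theorem tendsto_floor_mul_natCast_div_atTop (x : ℝ) :
    Tendsto (fun N : ℕ ↦ (⌊x * N⌋ : ℝ) / N) atTop (𝓝 x) := by
  refine tendsto_of_tendsto_of_tendsto_of_le_of_le' (g := fun N : ℕ ↦ x - 1 / N) ?_
    tendsto_const_nhds ?_ ?_
  · simpa using tendsto_const_nhds.sub (tendsto_one_div_atTop_nhds_zero_nat (𝕜 := ℝ))
  all_goals
    filter_upwards [eventually_gt_atTop 0] with N hN
    have hN : (0 : ℝ) < N := Nat.cast_pos.2 hN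
  · rw [le_div_iff₀ hN, sub_mul, one_div_mul_cancel hN.ne']
    exact (Int.sub_one_lt_floor _).le
  · exact (div_le_iff₀ hN).2 (Int.floor_le _)

theorem dotProduct_map_intCast_mulVec [Fintype ι] (A : Matrix ι ι ℤ) (v : ι → ℤ) :
    (fun i ↦ (v i : ℝ)) ⬝ᵥ A.map Int.cast *ᵥ (fun i ↦ (v i : ℝ)) = ((v ⬝ᵥ A *ᵥ v : ℤ) : ℝ) := by
  simp [dotProduct, mulVec]

theorem posSemidef_map_intCast [Finite ι] {A : Matrix ι ι ℤ} (hA : A.PosSemidef) :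
    (A.map (Int.cast : ℤ → ℝ)).PosSemidef := by
  have := Fintype.ofFinite ι
  refine .of_dotProduct_mulVec_nonneg (hA.isHermitian.map _ fun _ ↦ by simp) fun x ↦ ?_
  let Q (y : ι → ℝ) : ℝ := y ⬝ᵥ A.map Int.cast *ᵥ y
  have hQ_cont : Continuous Q := by fun_prop
  have hQ_rat (N : ℕ) : 0 ≤ Q fun i ↦ ⌊x i * N⌋ / N := by
    have hint : (0 : ℝ) ≤ ((fun i ↦ ⌊x i * N⌋) ⬝ᵥ A *ᵥ (fun i ↦ ⌊x i * N⌋) : ℤ) :=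
      Int.cast_nonneg (by simpa using hA.dotProduct_mulVec_nonneg fun i ↦ ⌊x i * N⌋)
    have hsmul : (fun i ↦ (⌊x i * N⌋ / N : ℝ)) = (N : ℝ)⁻¹ • fun i ↦ ((⌊x i * N⌋ : ℤ) : ℝ) := by
      ext i
      simp [div_eq_inv_mul]
    simp only [Q, hsmul, mulVec_smul, dotProduct_smul, smul_dotProduct,
      dotProduct_map_intCast_mulVec]
    positivity
  have hlim := tendsto_pi_nhds.2 fun i ↦ tendsto_floor_mul_natCast_div_atTop (x i)
  exact ge_of_tendsto' ((hQ_cont.tendsto x).comp hlim) hQ_rat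

theorem posDef_map_intCast [Fintype ι] [DecidableEq ι] {A : Matrix ι ι ℤ} (hA : A.PosSemidef)
    (hdet : A.det ≠ 0) : (A.map (Int.cast : ℤ → ℝ)).PosDef := by
  rw [(posSemidef_map_intCast hA).posDef_iff_det_ne_zero, ← Int.cast_det]
  exact_mod_cast hdet

theorem exists_dotProduct_mulVec_eq_one {n : ℕ} (hn0 : 0 < n) (hn4 : n ≤ 4)
    {A : Matrix (Fin n) (Fin n) ℤ} (hA : A.PosDef) (hdet : A.det = 1) :
    ∃ v : Fin n → ℤ, v ⬝ᵥ A *ᵥ v = 1 := by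
  have hA' := posDef_map_intCast hA.posSemidef (by simp [hdet])
  obtain ⟨v, hv0, hv⟩ := exists_int_dotProduct_mulVec_lt hA' (r := √2) (by positivity)
    (by simpa [← Int.cast_det, hdet] using two_pow_lt_volume_ball_sqrt_two hn0 hn4)
  rw [dotProduct_map_intCast_mulVec, Real.sq_sqrt zero_le_two] at hv
  have hpos : 0 < v ⬝ᵥ A *ᵥ v := by simpa using hA.dotProduct_mulVec_pos hv0
  have hlt : v ⬝ᵥ A *ᵥ v < 2 := by exact_mod_cast hv
  exact ⟨v, by lia⟩

end ShortVectors

/-! ### Unimodular lattices of small rank -/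

section UnimodularLattices

open Matrix
open Module (Basis)
open LinearMap (BilinForm ker)

section UnitVector

variable {R M : Type*} [CommRing R] [AddCommGroup M] [Module R M]
  {B : BilinForm R M} {x : M} {n : ℕ}

theorem exists_basis_eq_cons_of_self_eq_one (hx : B x x = 1) (c : Basis (Fin n) R (ker (B x))) :
    ∃ d : Basis (Fin (n + 1)) R M, ⇑d = Fin.cons x ((↑) ∘ c) := by
  refine ⟨.mkFinCons x c (fun r y hy h ↦ ?_) fun y ↦ ⟨-B x y, ?_⟩, Basis.coe_mkFinCons ..⟩
  · simpa [hx, LinearMap.mem_ker.1 hy] using congrArg (B x) h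
  · simp [hx]

theorem toMatrix_submatrix_succ_of_eq_cons {c : Basis (Fin n) R (ker (B x))}
    {d : Basis (Fin (n + 1)) R M} (hd : ⇑d = Fin.cons x ((↑) ∘ c)) :
    (B.toMatrix d).submatrix Fin.succ Fin.succ = (B.restrict (ker (B x))).toMatrix c := by
  ext i j
  simp [LinearMap.BilinForm.toMatrix_apply, hd]

theorem toMatrix_zero_of_eq_cons (hx : B x x = 1) {c : Basis (Fin n) R (ker (B x))}
    {d : Basis (Fin (n + 1)) R M} (hd : ⇑d = Fin.cons x ((↑) ∘ c)) (j : Fin (n + 1)) :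
    B.toMatrix d 0 j = if j = 0 then 1 else 0 := by
  have hxc (i : Fin n) : B x (c i) = 0 := (c i).2
  cases j using Fin.cases <;> simp [LinearMap.BilinForm.toMatrix_apply, hd, hx, hxc]

theorem det_toMatrix_eq_det_toMatrix_restrict_ker (hx : B x x = 1)
    {c : Basis (Fin n) R (ker (B x))} {d : Basis (Fin (n + 1)) R M}
    (hd : ⇑d = Fin.cons x ((↑) ∘ c)) :
    (B.toMatrix d).det = ((B.restrict (ker (B x))).toMatrix c).det := by
  rw [← toMatrix_submatrix_succ_of_eq_cons hd]
  simp [det_succ_row_zero, toMatrix_zero_of_eq_cons hx hd]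

theorem toMatrix_eq_one_of_toMatrix_restrict_ker (hB : B.IsSymm) (hx : B x x = 1)
    {c : Basis (Fin n) R (ker (B x))} {d : Basis (Fin (n + 1)) R M}
    (hd : ⇑d = Fin.cons x ((↑) ∘ c)) (hc : (B.restrict (ker (B x))).toMatrix c = 1) :
    B.toMatrix d = 1 := by
  have hsymm := (LinearMap.BilinForm.isSymm_toMatrix_iff_isSymm d).2 hB
  ext i j
  cases i using Fin.cases with
  | zero => simp [toMatrix_zero_of_eq_cons hx hd, one_apply, eq_comm]
  | succ i =>
    cases j using Fin.cases with
    | zero => rw [← hsymm.apply, toMatrix_zero_of_eq_cons hx hd]; rfl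
    | succ j =>
      rw [← toMatrix_submatrix_succ_of_eq_cons hd] at hc
      simpa [one_apply] using congr_fun₂ hc i j

end UnitVector

theorem det_toMatrix_eq_det_toMatrix {ι L : Type*} [Fintype ι] [DecidableEq ι] [AddCommGroup L]
    (b c : Basis ι ℤ L) (B : BilinForm ℤ L) :
    (B.toMatrix b).det = (B.toMatrix c).det := by
  have hunit : (b.toMatrix c).det * (b.toMatrix c).det = 1 :=
    Int.isUnit_mul_self (b.isUnit_det c)
  rw [← LinearMap.BilinForm.toMatrix_mul_basis_toMatrix b c, det_mul, det_mul, det_transpose,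
    mul_right_comm, hunit, one_mul]

theorem exists_self_eq_one {n : ℕ} (hn0 : 0 < n) (hn4 : n ≤ 4) {L : Type*} [AddCommGroup L]
    (b : Basis (Fin n) ℤ L) {B : BilinForm ℤ L} (hB : B.IsSymm) (hpos : B.toQuadraticMap.PosDef)
    (hdet : (B.toMatrix b).det = 1) : ∃ x, B x x = 1 := by
  obtain ⟨v, hv⟩ := exists_dotProduct_mulVec_eq_one hn0 hn4
    ((B.posDef_toQuadraticMap_iff_matrix b hB).1 hpos) hdet
  refine ⟨b.equivFun.symm v, ?_⟩
  rw [← hv, LinearMap.BilinForm.dotProduct_toMatrix_mulVec]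

theorem exists_basis_toMatrix_eq_one {n : ℕ} (hn : n ≤ 4) {L : Type*} [AddCommGroup L]
    (b : Basis (Fin n) ℤ L) {B : BilinForm ℤ L} (hB : B.IsSymm) (hpos : B.toQuadraticMap.PosDef)
    (hdet : (B.toMatrix b).det = 1) : ∃ c : Basis (Fin n) ℤ L, B.toMatrix c = 1 := by
  induction n generalizing L with
  | zero => exact ⟨b, Subsingleton.elim _ _⟩
  | succ n ih =>
    obtain ⟨x, hx⟩ := exists_self_eq_one n.succ_pos hn b hB hpos hdet
    obtain ⟨m, ⟨c⟩⟩ := Submodule.nonempty_basis_of_pid b (ker (B x))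
    obtain ⟨d, hd⟩ := exists_basis_eq_cons_of_self_eq_one hx c
    obtain rfl : m = n := by simpa using Fintype.card_congr (d.indexEquiv b)
    have hdet' : ((B.restrict (ker (B x))).toMatrix c).det = 1 := by
      rw [← det_toMatrix_eq_det_toMatrix_restrict_ker hx hd,
        det_toMatrix_eq_det_toMatrix d b, hdet]
    have hpos' : (B.restrict (ker (B x))).toQuadraticMap.PosDef := fun y hy ↦
      hpos y (by simpa using hy)
    obtain ⟨c', hc'⟩ := ih (by lia) c ⟨fun y z ↦ hB.eq y z⟩ hpos' hdet'
    obtain ⟨d', hd'⟩ := exists_basis_eq_cons_of_self_eq_one hx c'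
    exact ⟨d', toMatrix_eq_one_of_toMatrix_restrict_ker hB hx hd' hc'⟩

theorem exists_eq_transpose_mul_self_of_posDef_of_det_eq_one {n : ℕ} (hn : n ≤ 4)
    {A : Matrix (Fin n) (Fin n) ℤ} (hA : A.PosDef) (hdet : A.det = 1) :
    ∃ U : Matrix (Fin n) (Fin n) ℤ, A = Uᵀ * U := by
  let b := Pi.basisFun ℤ (Fin n)
  have hAb : A.toBilin'.toMatrix b = A := by
    rw [LinearMap.BilinForm.toMatrix_basisFun, LinearMap.BilinForm.toMatrix'_toBilin']
  have hsymm : A.toBilin'.IsSymm :=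
    Matrix.isSymm_toBilin'_iff_isSymm.2 (Matrix.isHermitian_iff_isSymm.1 hA.isHermitian)
  have hpos : A.toBilin'.toQuadraticMap.PosDef :=
    (LinearMap.BilinForm.posDef_toQuadraticMap_iff_matrix b _ hsymm).2 (by rwa [hAb])
  obtain ⟨c, hc⟩ := exists_basis_toMatrix_eq_one hn b hsymm hpos (by rwa [hAb])
  refine ⟨c.toMatrix b, ?_⟩
  conv_lhs => rw [← hAb, ← LinearMap.BilinForm.toMatrix_mul_basis_toMatrix c, hc, mul_one]

end UnimodularLattices

/-! ### Sums of three squares -/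

section ThreeSquares

open Matrix
open scoped NumberTheorySymbols

theorem posDef_of_eq_mul_sub_one {n d p c t : ℤ} (hd : 0 < d) (hp : 0 < p)
    (hpn : p = d * n - 1) (hc : p * c = d + t ^ 2) :
    (!![c, t, 1; t, p, 0; 1, 0, n] : Matrix (Fin 3) (Fin 3) ℤ).PosDef := by
  refine .of_dotProduct_mulVec_pos ?_ fun v hv ↦ ?_
  · ext i j
    fin_cases i <;> fin_cases j <;> rfl
  simp only [star_trivial, dotProduct, mulVec, Fin.sum_univ_three, of_apply, cons_val]
  generalize hx : v 0 = x, hy : v 1 = y, hz : v 2 = z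
  by_contra! hle
  have hsq : d * (t * x + p * y) ^ 2 + (d * x + p * z) ^ 2 + p * z ^ 2 ≤ 0 := by
    calc _ = d * p * (x * (c * x + t * y + 1 * z) + y * (t * x + p * y + 0 * z) +
          z * (1 * x + 0 * y + n * z)) := by
          rw [hpn] at hc ⊢
          linear_combination d * x ^ 2 * (-hc)
      _ ≤ 0 := mul_nonpos_of_nonneg_of_nonpos (by positivity) hle
  have hy' : 0 ≤ d * (t * x + p * y) ^ 2 := by positivity
  have hx' : 0 ≤ (d * x + p * z) ^ 2 := sq_nonneg _
  have hz' : 0 ≤ p * z ^ 2 := by positivity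
  have hz0 : z = 0 := by simpa [hp.ne'] using le_antisymm (by linarith) hz'
  have hx0 : x = 0 := by simpa [hz0, hd.ne'] using le_antisymm (by linarith) hx'
  have hy0 : y = 0 := by simpa [hx0, hp.ne', hd.ne'] using le_antisymm (by linarith) hy'
  refine hv (funext fun i ↦ ?_)
  fin_cases i <;> simp_all

theorem exists_sum_three_sq_of_eq_mul_sub_one {n d p c t : ℤ} (hd : 0 < d) (hp : 0 < p)
    (hpn : p = d * n - 1) (hc : p * c = d + t ^ 2) :
    ∃ x y z : ℤ, n = x ^ 2 + y ^ 2 + z ^ 2 := by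
  have hdet : (!![c, t, 1; t, p, 0; 1, 0, n] : Matrix (Fin 3) (Fin 3) ℤ).det = 1 := by
    simp only [det_fin_three, of_apply, cons_val]
    linear_combination n * hc - hpn
  obtain ⟨U, hU⟩ := exists_eq_transpose_mul_self_of_posDef_of_det_eq_one (by norm_num)
    (posDef_of_eq_mul_sub_one hd hp hpn hc) hdet
  refine ⟨U 0 2, U 1 2, U 2 2, ?_⟩
  simpa [mul_apply, Fin.sum_univ_three, ← sq] using congr_fun₂ hU 2 2

theorem isSquare_neg_of_mul_eq_add_one {p d n : ℕ} [Fact p.Prime] (hp : p % 4 = 1)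
    (hd : d % 4 = 1) (h : d * n = p + 1) : IsSquare (-d : ZMod p) := by
  have hodd : Odd d := by rw [Nat.odd_iff]; lia
  have hmod : (p : ℤ) % d = -1 % d :=
    Int.modEq_iff_dvd.2 ⟨-n, by zify at h; linear_combination h⟩
  have hJ : J(-d | p) = 1 := by
    rw [jacobiSym.neg _ (by rw [Nat.odd_iff]; lia), ZMod.χ₄_nat_one_mod_four hp, one_mul,
      ← jacobiSym.quadratic_reciprocity_one_mod_four hp hodd, jacobiSym.mod_left, hmod,
      ← jacobiSym.mod_left, jacobiSym.at_neg_one hodd, ZMod.χ₄_nat_one_mod_four hd]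
  simpa using ZMod.isSquare_of_jacobiSym_eq_one hJ

theorem exists_prime_add_one_eq_mul {n : ℕ} (hn : n % 4 = 2) :
    ∃ p d : ℕ, p.Prime ∧ p % 4 = 1 ∧ d % 4 = 1 ∧ d * n = p + 1 := by
  have hcop : (n - 1).Coprime (4 * n) := by
    have hodd : Odd (n - 1) := by rw [Nat.odd_iff]; lia
    have h2 : (n - 1).Coprime (2 ^ 2) := hodd.coprime_two_right.pow_right 2
    have hn1 : (n - 1).Coprime n :=
      (Nat.coprime_self_sub_left (by lia)).2 n.coprime_one_left
    exact h2.mul_right hn1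
  obtain ⟨p, hpn, hp, hmod⟩ := Nat.forall_exists_prime_gt_and_modEq n (by lia) hcop
  obtain ⟨j, hj⟩ := (Nat.modEq_iff_dvd' (by lia)).1 hmod.symm
  rw [mul_assoc] at hj
  exact ⟨p, 4 * j + 1, hp, by lia, by lia, by rw [add_mul, mul_assoc, mul_comm j]; lia⟩

theorem exists_sum_three_sq_of_mod_four_eq_two {n : ℕ} (hn : n % 4 = 2) :
    ∃ x y z : ℤ, n = x ^ 2 + y ^ 2 + z ^ 2 := by
  obtain ⟨p, d, hp, hp4, hd4, hdn⟩ := exists_prime_add_one_eq_mul hn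
  have : Fact p.Prime := ⟨hp⟩
  obtain ⟨s, hs⟩ := isSquare_neg_of_mul_eq_add_one hp4 hd4 hdn
  obtain ⟨t, rfl⟩ := ZMod.intCast_surjective s
  obtain ⟨c, hc⟩ : (p : ℤ) ∣ d + t ^ 2 := by
    rw [← ZMod.intCast_zmod_eq_zero_iff_dvd]
    push_cast
    linear_combination -hs
  refine exists_sum_three_sq_of_eq_mul_sub_one (d := d) (by lia) (mod_cast hp.pos) ?_ hc.symm
  zify at hdn
  linear_combination -hdn

end ThreeSquares

/-! ### The form `x² + 2y² + 3(z² + zw + w²)` -/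

theorem sq_emod_three (t : ℤ) : t ^ 2 % 3 = if 3 ∣ t then 0 else 1 := by
  obtain h | h | h : t % 3 = 0 ∨ t % 3 = 1 ∨ t % 3 = 2 := by lia
  all_goals simp [pow_two, Int.mul_emod, Int.dvd_iff_emod_eq_zero, h]

theorem exists_sq_eq_sq_and_dvd_sub_of_prime {p : ℤ} (hp : Prime p) {a b : ℤ}
    (h : p ∣ a ^ 2 - b ^ 2) : ∃ c, c ^ 2 = b ^ 2 ∧ p ∣ a - c := by
  rw [sq_sub_sq] at h
  rcases hp.dvd_or_dvd h with h | h
  · exact ⟨-b, neg_sq b, by rwa [sub_neg_eq_add]⟩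
  · exact ⟨b, rfl, h⟩

theorem exists_three_dvd_sub_of_sum_three_sq {n x y z : ℤ} (h : 3 * n = x ^ 2 + y ^ 2 + z ^ 2) :
    ∃ y' z' : ℤ, 3 * n = x ^ 2 + y' ^ 2 + z' ^ 2 ∧ 3 ∣ x - y' ∧ 3 ∣ x - z' := by
  have hx := sq_emod_three x
  have hy := sq_emod_three y
  have hz := sq_emod_three z
  obtain ⟨y', hy', hxy⟩ := exists_sq_eq_sq_and_dvd_sub_of_prime Int.prime_three
    (show 3 ∣ x ^ 2 - y ^ 2 by split_ifs at hx hy hz <;> lia)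
  obtain ⟨z', hz', hxz⟩ := exists_sq_eq_sq_and_dvd_sub_of_prime Int.prime_three
    (show 3 ∣ x ^ 2 - z ^ 2 by split_ifs at hx hy hz <;> lia)
  exact ⟨y', z', by rw [h, hy', hz'], hxy, hxz⟩

theorem exists_eq_sq_add_two_mul_sq_add_three_mul_sq_of_three_dvd_sub {n x y z : ℤ}
    (h : 6 * n = x ^ 2 + y ^ 2 + z ^ 2) (hxy : 3 ∣ x - y) (hxz : 3 ∣ x - z) :
    ∃ u v w : ℤ, n = u ^ 2 + 2 * v ^ 2 + 3 * w ^ 2 := by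
  wlog hpar : 2 ∣ x - y generalizing x y z
  · by_cases hpar' : 2 ∣ x - z
    · exact this (by linarith) hxz hxy hpar'
    · exact this (x := y) (y := z) (z := x) (by linarith) (by lia) (by lia) (by lia)
  have heven : 2 ∣ z := by
    obtain ⟨k, hk⟩ := hpar
    obtain rfl : x = y + 2 * k := by linarith
    exact Int.prime_two.dvd_of_dvd_pow (n := 2)
      ⟨3 * n - y ^ 2 - 2 * y * k - 2 * k ^ 2, by linear_combination -h⟩
  obtain ⟨u, hu⟩ : 6 ∣ x + y - 2 * z := by lia
  obtain ⟨v, hv⟩ : 6 ∣ x + y + z := by lia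
  obtain ⟨w, hw⟩ : 6 ∣ x - y := by lia
  refine ⟨u, v, w, mul_left_cancel₀ (show (36 : ℤ) ≠ 0 by norm_num) ?_⟩
  calc 36 * n = 6 * (x ^ 2 + y ^ 2 + z ^ 2) := by rw [← h]; ring
    _ = (x + y - 2 * z) ^ 2 + 2 * (x + y + z) ^ 2 + 3 * (x - y) ^ 2 := by ring
    _ = 36 * (u ^ 2 + 2 * v ^ 2 + 3 * w ^ 2) := by rw [hu, hv, hw]; ring

theorem exists_eq_sq_add_two_mul_sq_add_three_mul_sq {n x y z : ℤ}
    (h : 6 * n = x ^ 2 + y ^ 2 + z ^ 2) :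
    ∃ u v w : ℤ, n = u ^ 2 + 2 * v ^ 2 + 3 * w ^ 2 := by
  obtain ⟨y', z', h', hxy, hxz⟩ := exists_three_dvd_sub_of_sum_three_sq (n := 2 * n)
    (by rw [← h]; ring)
  exact exists_eq_sq_add_two_mul_sq_add_three_mul_sq_of_three_dvd_sub
    (by rw [← h']; ring) hxy hxz

theorem exists_eq_sq_add_two_mul_sq_add_three_mul_sq_of_odd {n : ℕ} (hn : Odd n) :
    ∃ x y z : ℤ, n = x ^ 2 + 2 * y ^ 2 + 3 * z ^ 2 := by
  have hmod : 6 * n % 4 = 2 := by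
    rw [Nat.odd_iff] at hn; lia
  obtain ⟨x, y, z, h⟩ := exists_sum_three_sq_of_mod_four_eq_two hmod
  exact exists_eq_sq_add_two_mul_sq_add_three_mul_sq (n := n) (mod_cast h)

theorem exists_eq_sq_add_two_mul_sq_add_three_mul_sq_add_nine_mul_sq (n : ℕ) :
    ∃ x y z w : ℤ, n = x ^ 2 + 2 * y ^ 2 + 3 * z ^ 2 + 9 * w ^ 2 := by
  induction n using Nat.strong_induction_on with
  | _ n ih =>
    have hodd {m : ℕ} (hm : m % 2 = 1) :=
      exists_eq_sq_add_two_mul_sq_add_three_mul_sq_of_odd (Nat.odd_iff.2 hm)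
    obtain hn | ⟨m, rfl⟩ | hn : n % 2 = 1 ∨ 4 ∣ n ∨ n % 4 = 2 := by lia
    · obtain ⟨x, y, z, h⟩ := hodd hn
      exact ⟨x, y, z, 0, by rw [h]; ring⟩
    · obtain rfl | hm := m.eq_zero_or_pos
      · exact ⟨0, 0, 0, 0, rfl⟩
      · obtain ⟨x, y, z, w, h⟩ := ih m (by lia)
        exact ⟨2 * x, 2 * y, 2 * z, 2 * w, by push_cast; rw [h]; ring⟩
    · obtain rfl | rfl | hn9 : n = 2 ∨ n = 6 ∨ 9 ≤ n := by lia
      · exact ⟨0, 1, 0, 0, rfl⟩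
      · exact ⟨1, 1, 1, 0, rfl⟩
      · obtain ⟨x, y, z, h⟩ := hodd (m := n - 9) (by lia)
        exact ⟨x, y, z, 1, by zify [hn9] at h; linear_combination h⟩

section Necessity

variable {a b x y z w : ℤ}

theorem sq_add_mul_add_sq_nonneg (z w : ℤ) : 0 ≤ z ^ 2 + z * w + w ^ 2 := by
  nlinarith [sq_nonneg (z + w), sq_nonneg z, sq_nonneg w]

theorem sq_add_mul_add_sq_ne_two (z w : ℤ) : z ^ 2 + z * w + w ^ 2 ≠ 2 := by
  intro h
  have heven : Even (z ^ 2 + z * w + w ^ 2) := h ▸ even_two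
  obtain ⟨⟨u, rfl⟩, v, rfl⟩ : Even z ∧ Even w := by
    simp only [Int.even_add, Int.even_mul, Int.even_pow] at heven
    tauto
  exact absurd (Dvd.intro (u ^ 2 + u * v + v ^ 2) (by linear_combination h))
    (show ¬(4 : ℤ) ∣ 2 by norm_num)

theorem le_mul_sq_of_ne_zero (ha : 0 ≤ a) (hx : x ≠ 0) : a ≤ a * x ^ 2 :=
  le_mul_of_one_le_right ha (Int.add_one_le_iff.2 (sq_pos_of_ne_zero hx))

theorem le_one_of_represents_one (ha : 0 ≤ a) (hab : a ≤ b)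
    (h : 1 = a * x ^ 2 + b * y ^ 2 + 3 * (z ^ 2 + z * w + w ^ 2)) : a ≤ 1 := by
  have hq := sq_add_mul_add_sq_nonneg z w
  have hax : 0 ≤ a * x ^ 2 := by positivity
  have hby : 0 ≤ b * y ^ 2 := mul_nonneg (ha.trans hab) (sq_nonneg y)
  by_cases hx : x = 0
  · have hy : y ≠ 0 := by
      rintro rfl
      simp only [hx] at h
      lia
    linarith [le_mul_sq_of_ne_zero (ha.trans hab) hy]
  · linarith [le_mul_sq_of_ne_zero ha hx]

theorem le_two_of_represents_two (hb : 0 ≤ b)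
    (h : 2 = x ^ 2 + b * y ^ 2 + 3 * (z ^ 2 + z * w + w ^ 2)) : b ≤ 2 := by
  have hq := sq_add_mul_add_sq_nonneg z w
  have hy : y ≠ 0 := by
    rintro rfl
    have := sq_emod_three x
    split_ifs at this <;> lia
  linarith [sq_nonneg x, le_mul_sq_of_ne_zero hb hy]

theorem sq_add_sq_add_three_mul_ne_six (x y z w : ℤ) :
    x ^ 2 + y ^ 2 + 3 * (z ^ 2 + z * w + w ^ 2) ≠ 6 := by
  intro h
  have hq := sq_add_mul_add_sq_nonneg z w
  obtain ⟨⟨u, rfl⟩, v, rfl⟩ : 3 ∣ x ∧ 3 ∣ y := by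
    have hx := sq_emod_three x
    have hy := sq_emod_three y
    split_ifs at hx hy <;> first | exact ⟨‹_›, ‹_›⟩ | lia
  have huv : u ^ 2 + v ^ 2 < 1 := by linarith
  have huv0 : u ^ 2 + v ^ 2 = 0 := le_antisymm (Int.lt_add_one_iff.1 huv) (by positivity)
  exact sq_add_mul_add_sq_ne_two z w (by linarith)

end Necessity

theorem exists_eq_sq_add_two_mul_sq_add_three_mul (n : ℕ) :
    ∃ x y z w : ℤ, n = x ^ 2 + 2 * y ^ 2 + 3 * (z ^ 2 + z * w + w ^ 2) := by
  obtain ⟨x, y, z, w, h⟩ := exists_eq_sq_add_two_mul_sq_add_three_mul_sq_add_nine_mul_sq n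
  exact ⟨x, y, z - w, 2 * w, by rw [h]; ring⟩

theorem stmt_13 (a b : ℕ) (ha : 0 < a) (hb : 0 < b) (hab : a ≤ b) :
    (∀ n : ℕ, ∃ x y z w : ℤ,
      (n : ℤ) = a * x ^ 2 + b * y ^ 2 + 3 * (z ^ 2 + z * w + w ^ 2)) ↔
    (a = 1 ∧ b = 2) := by
  constructor
  · intro hrep
    obtain ⟨_, _, _, _, h1⟩ := hrep 1
    have ha1 : (a : ℤ) ≤ 1 := le_one_of_represents_one a.cast_nonneg (mod_cast hab) h1
    obtain rfl : a = 1 := by lia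
    obtain ⟨_, _, _, _, h2⟩ := hrep 2
    have hb2 : (b : ℤ) ≤ 2 := le_two_of_represents_two b.cast_nonneg (by simpa using h2)
    obtain ⟨x, y, z, w, h6⟩ := hrep 6
    have hb1 : b ≠ 1 := by
      rintro rfl
      exact sq_add_sq_add_three_mul_ne_six x y z w (by simpa using h6.symm)
    exact ⟨rfl, by lia⟩
  · rintro ⟨rfl, rfl⟩ n
    simpa using exists_eq_sq_add_two_mul_sq_add_three_mul n
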